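/- Define a probability measure on partitions λ ⊆ n^m with |λ| = p by P(λ) = s_λ(1^m) · s_{λ'}(1^n) / C(mn, p) (the distribution of a random irreducible component of Λ^p(ℂ^m ⊗ ℂ^n)). Then P(λ) also equals f^λ · f^{n^m/λ} / f^{n^m}, i.e., the probability that a uniformly random standard Young tableau of rectangular shape n^m has its entries ≤ p forming exactly the shape λ. -/

import Mathlib

open YoungDiagram Finset

/-- The rectangular Young diagram with `m` rows and `n` columns. -/
def rect (m n : ℕ) : YoungDiagram where
  cells := Finset.range m ×ˢ Finset.range n
  isLowerSet := by
    rintro ⟨a1, a2⟩ ⟨b1, b2⟩ ⟨h1, h2⟩ hb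
    simp only [Finset.coe_product, Set.mem_prod, Finset.mem_coe, Finset.mem_range] at *
    exact ⟨lt_of_le_of_lt h1 hb.1, lt_of_le_of_lt h2 hb.2⟩

/-- The 180°-rotated complement of a Young diagram `μ` inside the rectangle with
`m` rows and `n` columns: its row lengths are `n - μ.rowLen (m-1-i)`. -/
def complement (m n : ℕ) (μ : YoungDiagram) : YoungDiagram where
  cells := (Finset.range m ×ˢ Finset.range n).filter fun p => p.2 < n - μ.rowLen (m - 1 - p.1)
  isLowerSet := by
    rintro ⟨a1, a2⟩ ⟨b1, b2⟩ ⟨h1, h2⟩ hb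
    simp only [Finset.coe_filter, Set.mem_setOf_eq, Finset.mem_product, Finset.mem_range] at *
    refine ⟨⟨lt_of_le_of_lt h1 hb.1.1, lt_of_le_of_lt h2 hb.1.2⟩, ?_⟩
    calc b2 ≤ a2 := h2
      _ < n - μ.rowLen (m - 1 - a1) := hb.2
      _ ≤ n - μ.rowLen (m - 1 - b1) :=
          Nat.sub_le_sub_left (μ.rowLen_anti _ _ (Nat.sub_le_sub_left h1 _)) n

/-- The hook length of the cell `c` in the Young diagram `μ` (arm + leg + 1). -/
def hookLength (μ : YoungDiagram) (c : ℕ × ℕ) : ℕ :=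
  (μ.rowLen c.1 - c.2) + (μ.colLen c.2 - c.1) - 1

/-- The product of all hook lengths of `μ`. -/
def hookProd (μ : YoungDiagram) : ℕ := ∏ c ∈ μ.cells, hookLength μ c

/-- The number of semistandard Young tableaux of shape `μ` with entries in `{0, …, k-1}`;
this equals `s_μ(1^k) = dim S^μ(ℂ^k)`. -/
noncomputable def ssytCount (μ : YoungDiagram) (k : ℕ) : ℕ :=
  Set.ncard {T : SemistandardYoungTableau μ | ∀ i j, (i, j) ∈ μ → T i j < k}

/-- `T : ℕ × ℕ → ℕ` is a standard Young tableau of shape `μ` (with entries `0, …, |μ|-1`):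
it is a bijection from the cells of `μ` to `{0, …, |μ|-1}`, strictly increasing along
rows and columns, and zero outside `μ`. -/
def IsSyt (μ : YoungDiagram) (T : ℕ × ℕ → ℕ) : Prop :=
  Set.BijOn T (μ.cells : Set (ℕ × ℕ)) (Finset.range μ.card : Set ℕ) ∧
  (∀ i j, (i, j + 1) ∈ μ → T (i, j) < T (i, j + 1)) ∧
  (∀ i j, (i + 1, j) ∈ μ → T (i, j) < T (i + 1, j)) ∧
  (∀ c, c ∉ μ → T c = 0)

/-- The number of standard Young tableaux of shape `μ`, i.e. `f^μ`. -/
noncomputable def sytCount (μ : YoungDiagram) : ℕ := Set.ncard {T | IsSyt μ T}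

/-!
Record a diagram `μ` with at most `m` rows by its set `A` of `m` beta numbers, and write `Δ` for the
Vandermonde product. Two classical facts determine all the counts: the Weyl dimension formula
`s_μ(1^m) = Δ(A) / Δ({0, …, m - 1})`, proved by removing the horizontal strip of largest entries,
and the Frobenius formula `f^μ = |μ|! Δ(A) / ∏_{a ∈ A} a!`, proved by removing the corner with the
largest entry. Cutting a rectangular tableau along `μ` leaves a tableau of shape `μ` and, after a
rotation, one whose shape is the complement of `μ`. The complement has beta set
`{m + n - 1 - a | a ∈ A}`, and the transpose of `μ` has as its beta set the points of
`{0, …, m + n - 1}` not of that form. The theorem is then the relation between the Vandermonde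
products of complementary subsets of `{0, …, N - 1}`, which follows by comparing the distances
within and between the two subsets.
-/

open scoped Nat

section Determinants

variable {R : Type*} [CommRing R]

theorem det_updateRow_eq_sum_mul_adjugate {ι : Type*} [Fintype ι] [DecidableEq ι]
    (M : Matrix ι ι R) (i : ι) (v : ι → R) :
    (M.updateRow i v).det = ∑ j, v j * M.adjugate j i := by
  rw [← Matrix.cramer_transpose_apply, Matrix.cramer_eq_adjugate_mulVec,
    ← Matrix.adjugate_transpose, Matrix.mulVec_eq_sum]
  simp

theorem sum_det_updateRow_add_mul {ι : Type*} [Fintype ι] [DecidableEq ι]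
    (M : Matrix ι ι R) (c d : ι → R) :
    ∑ i, (M.updateRow i fun j => (c i + d j) * M i j).det = (∑ i, c i + ∑ j, d j) * M.det := by
  have row_sum (i : ι) : ∑ j, M i j * M.adjugate j i = M.det := by
    simp [← Matrix.mul_apply, Matrix.mul_adjugate]
  have col_sum (j : ι) : ∑ i, M i j * M.adjugate j i = M.det := by
    simp_rw [mul_comm (M _ j)]
    simp [← Matrix.mul_apply, Matrix.adjugate_mul]
  calc ∑ i, (M.updateRow i fun j => (c i + d j) * M i j).det
      = ∑ i, c i * ∑ j, M i j * M.adjugate j i + ∑ j, d j * ∑ i, M i j * M.adjugate j i := by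
        simp_rw [mul_sum, det_updateRow_eq_sum_mul_adjugate, add_mul, sum_add_distrib, mul_assoc]
        rw [sum_comm (f := fun j i => d j * _)]
    _ = (∑ i, c i + ∑ j, d j) * M.det := by
        simp_rw [row_sum, col_sum, ← sum_mul, add_mul]

theorem mul_descPochhammer_eval_sub_one (j : ℕ) (x : R) :
    x * (descPochhammer R j).eval (x - 1) = (x - j) * (descPochhammer R j).eval x := by
  rw [mul_comm (x - j), ← descPochhammer_succ_eval, descPochhammer_succ_left]
  simp

variable [IsDomain R] {m : ℕ}

theorem det_vandermonde_eq_det_descPochhammer (x : Fin m → R) :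
    (Matrix.vandermonde x).det
      = (Matrix.of fun i j : Fin m => (descPochhammer R j).eval (x i)).det :=
  Matrix.det_eval_matrixOfPolynomials_eq_det_vandermonde x _
    (fun j => descPochhammer_natDegree R j) fun j => monic_descPochhammer R j

/-- The operator `p(x) ↦ x p(x - 1)` multiplies the `j`-th falling factorial by `x - j`, so the
sum over all rows only sees the trace. -/
theorem sum_mul_det_vandermonde_update_sub_one (x : Fin m → R) :
    ∑ i, x i * (Matrix.vandermonde (Function.update x i (x i - 1))).det
      = (∑ i, (x i - (i : ℕ))) * (Matrix.vandermonde x).det := by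
  have update_eq_updateRow (i : Fin m) :
      (Matrix.of fun k j : Fin m => (descPochhammer R j).eval (Function.update x i (x i - 1) k))
        = (Matrix.of fun k j : Fin m => (descPochhammer R j).eval (x k)).updateRow i
            fun j => (descPochhammer R j).eval (x i - 1) := by
    ext k j
    by_cases h : k = i <;> simp [Matrix.updateRow_apply, h]
  have row_update (i : Fin m) :
      x i * (Matrix.vandermonde (Function.update x i (x i - 1))).det
        = ((Matrix.of fun k j : Fin m => (descPochhammer R j).eval (x k)).updateRow i
            fun j => (x i + -(j : ℕ)) * (descPochhammer R j).eval (x i)).det := by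
    rw [det_vandermonde_eq_det_descPochhammer, update_eq_updateRow, ← Matrix.det_updateRow_smul]
    simp_rw [← sub_eq_add_neg, ← mul_descPochhammer_eval_sub_one]
    rfl
  simp_rw [row_update, det_vandermonde_eq_det_descPochhammer x]
  rw [sum_sub_distrib, sub_eq_add_neg, ← sum_neg_distrib]
  exact sum_det_updateRow_add_mul _ x fun j => -((j : ℕ) : R)

theorem prod_factorial_mul_det_choose {m : ℕ} (l : Fin m → ℕ) :
    (∏ i : Fin m, ((i : ℕ)! : ℤ)) * (Matrix.of fun i j : Fin m => ((l i).choose j : ℤ)).det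
      = (Matrix.vandermonde fun i => (l i : ℤ)).det := by
  rw [det_vandermonde_eq_det_descPochhammer, ← Matrix.det_mul_row]
  simp_rw [descPochhammer_eval_eq_descFactorial, Nat.descFactorial_eq_factorial_mul_choose,
    Nat.cast_mul]
  rfl

theorem det_succ_of_forall_zero_eq_one {R : Type*} [CommRing R] {m : ℕ}
    (A : Matrix (Fin (m + 1)) (Fin (m + 1)) R) (hA : ∀ i, A i 0 = 1) :
    A.det = (Matrix.of fun i j : Fin m => A i.succ j.succ - A i.castSucc j.succ).det := by
  rw [Matrix.det_eq_of_forall_row_eq_smul_add_pred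
      (B := Matrix.of (Fin.cons (A 0) fun i j => A i.succ j - A i.castSucc j)) (fun _ => 1)
      (by simp) (by simp),
    Matrix.det_succ_column_zero, Fin.sum_univ_succ, sum_eq_zero, add_zero]
  · simp [hA, Matrix.submatrix]
  · simp [hA]

theorem sum_Icc_choose_add {a b : ℕ} (hab : a ≤ b) (i j : ℕ) :
    ∑ t ∈ Icc a b, ((t + i).choose j : ℤ)
      = (b + (i + 1)).choose (j + 1) - (a + i).choose (j + 1) := by
  induction b, hab using Nat.le_induction with
  | base => simp [← add_assoc, Nat.choose_succ_succ]
  | succ b hab ih =>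
    rw [sum_Icc_succ_top (by omega), ih, ← add_assoc (b + 1), Nat.choose_succ_succ (b + 1 + i),
      add_right_comm b 1 i, add_assoc b i 1]
    push_cast
    ring

theorem sum_det_choose_interlacing {m : ℕ} {l : Fin (m + 1) → ℕ} (hl : Monotone l) :
    ∑ q ∈ Fintype.piFinset fun i : Fin m => Icc (l i.castSucc) (l i.succ),
        (Matrix.of fun i j : Fin m => ((q i + i).choose j : ℤ)).det
      = (Matrix.of fun i j : Fin (m + 1) => ((l i + i).choose j : ℤ)).det := by
  rw [det_succ_of_forall_zero_eq_one _ (by simp)]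
  refine ((Matrix.detRowAlternating (R := ℤ) (n := Fin m)).toMultilinearMap.map_sum_finset
    (fun (i : Fin m) (t : ℕ) (j : Fin m) => ((t + i).choose j : ℤ)) _).symm.trans ?_
  refine congrArg Matrix.det (Matrix.ext fun i j => ?_)
  rw [Finset.sum_apply, sum_Icc_choose_add (hl i.castSucc_le_succ)]
  simp

end Determinants

section VandermondeProd

/-- The product of the distances `|a - b|` over all pairs of distinct points `a ∈ A`, `b ∈ B`. -/
def distProd (A B : Finset ℕ) : ℕ := ∏ a ∈ A, ∏ b ∈ B.erase a, Nat.dist a b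

/-- The Vandermonde product `∏ (a - b)` over all `a > b` in `A`, a natural number. -/
def vandermondeProd (A : Finset ℕ) : ℕ := ∏ a ∈ A, ∏ b ∈ A with b < a, (a - b)

variable {A B C : Finset ℕ}

theorem distProd_comm (A B : Finset ℕ) : distProd A B = distProd B A := by
  unfold distProd
  rw [prod_comm' (t' := B) (s' := A.erase) (by grind)]
  simp_rw [Nat.dist_comm]

theorem distProd_union_left (h : Disjoint A B) :
    distProd (A ∪ B) C = distProd A C * distProd B C :=
  prod_union h

theorem distProd_union_right (h : Disjoint B C) :
    distProd A (B ∪ C) = distProd A B * distProd A C := by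
  simp_rw [distProd_comm A, distProd_union_left h]

theorem vandermondeProd_pos (A : Finset ℕ) : 0 < vandermondeProd A :=
  prod_pos fun _ _ => prod_pos fun _ hb => Nat.sub_pos_of_lt (mem_filter.1 hb).2

theorem vandermondeProd_sq (A : Finset ℕ) : vandermondeProd A ^ 2 = distProd A A := by
  have above : ∏ a ∈ A, ∏ b ∈ A with a < b, (b - a) = vandermondeProd A :=
    prod_comm' (by grind)
  rw [sq]
  nth_rw 2 [← above]
  rw [vandermondeProd, ← prod_mul_distrib]
  refine prod_congr rfl fun a _ => ?_
  have split : A.erase a = {b ∈ A | b < a} ∪ {b ∈ A | a < b} := by grind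
  rw [split, prod_union (by grind [disjoint_left])]
  congr 1 <;> refine prod_congr rfl fun b hb => ?_
  · rw [Nat.dist_eq_sub_of_le_right (mem_filter.1 hb).2.le]
  · rw [Nat.dist_eq_sub_of_le (mem_filter.1 hb).2.le]

theorem vandermondeProd_image_of_dist_eq {f : ℕ → ℕ}
    (hf : ∀ a ∈ A, ∀ b ∈ A, Nat.dist (f a) (f b) = Nat.dist a b) :
    vandermondeProd (A.image f) = vandermondeProd A := by
  have inj : Set.InjOn f A := fun a ha b hb hab =>
    Nat.eq_of_dist_eq_zero (by rw [← hf a ha b hb, hab, Nat.dist_self])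
  refine Nat.pow_left_injective two_ne_zero ?_
  simp only [vandermondeProd_sq, distProd]
  rw [prod_image inj]
  refine prod_congr rfl fun a ha => ?_
  have image_erase : (A.image f).erase (f a) = (A.erase a).image f := by grind [Set.InjOn]
  rw [image_erase, prod_image (inj.mono (erase_subset a A))]
  exact prod_congr rfl fun b hb => hf a ha b (mem_of_mem_erase hb)

theorem cast_vandermondeProd_image_univ {m : ℕ} {l : Fin m → ℕ} (hl : StrictMono l) :
    (vandermondeProd (univ.image l) : ℤ) = (Matrix.vandermonde fun i => (l i : ℤ)).det := by
  have below (i : Fin m) : {b ∈ univ.image l | b < l i} = (Iio i).image l := by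
    ext b
    simp only [mem_filter, mem_image, mem_univ, true_and, mem_Iio]
    constructor
    · rintro ⟨⟨j, rfl⟩, hj⟩
      exact ⟨j, hl.lt_iff_lt.1 hj, rfl⟩
    · rintro ⟨j, hj, rfl⟩
      exact ⟨⟨j, rfl⟩, hl hj⟩
  rw [Matrix.det_vandermonde, vandermondeProd, prod_image hl.injective.injOn,
    prod_comm' (t' := univ) (s' := Iio) (by simp)]
  push_cast
  refine prod_congr rfl fun i _ => ?_
  rw [below, prod_image hl.injective.injOn]
  exact prod_congr rfl fun j hj => Nat.cast_sub (hl (mem_Iio.1 hj)).le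

theorem vandermondeProd_range (N : ℕ) : vandermondeProd (range N) = ∏ i ∈ range N, i ! := by
  refine prod_congr rfl fun a ha => ?_
  have below : {b ∈ range N | b < a} = range a := by grind
  rw [below, ← Nat.descFactorial_self, Nat.descFactorial_eq_prod_range]

theorem vandermondeProd_range_add (m n : ℕ) :
    vandermondeProd (range (n + m))
      = vandermondeProd (range n) * ∏ b ∈ (range m).image (n + ·), b ! := by
  rw [vandermondeProd_range, vandermondeProd_range, prod_range_add,
    prod_image (add_right_injective n).injOn]

theorem prod_dist_range_erase {a N : ℕ} (ha : a < N) :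
    ∏ b ∈ (range N).erase a, Nat.dist a b = a ! * (N - 1 - a)! := by
  have split : (range N).erase a = range a ∪ (range (N - 1 - a)).image (a + 1 + ·) := by
    ext b
    simp only [mem_erase, mem_range, mem_union, mem_image]
    constructor
    · rintro ⟨hne, hb⟩
      rcases lt_or_gt_of_ne hne with h | h
      · exact .inl h
      · exact .inr ⟨b - (a + 1), by omega, by omega⟩
    · rintro (h | ⟨c, hc, rfl⟩) <;> omega
  rw [split, prod_union (by simp only [disjoint_left, mem_range, mem_image]; omega),
    prod_image (add_right_injective _).injOn]
  congr 1
  · rw [← Nat.descFactorial_self a, Nat.descFactorial_eq_prod_range]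
    exact prod_congr rfl fun b hb => Nat.dist_eq_sub_of_le_right (mem_range.1 hb).le
  · rw [← prod_range_add_one_eq_factorial]
    refine prod_congr rfl fun b _ => ?_
    rw [Nat.dist_eq_sub_of_le (by omega)]
    omega

theorem vandermondeProd_range_sdiff {N : ℕ} (hB : B ⊆ range N) :
    vandermondeProd (range N \ B) * ∏ b ∈ B, (b ! * (N - 1 - b)!)
      = vandermondeProd B * vandermondeProd (range N) := by
  have factorials : ∏ b ∈ B, (b ! * (N - 1 - b)!) = distProd B (range N) :=
    (prod_congr rfl fun b hb => prod_dist_range_erase (mem_range.1 (hB hb))).symm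
  refine Nat.pow_left_injective two_ne_zero ?_
  have hdisj : Disjoint (range N \ B) B := sdiff_disjoint
  simp only [factorials, mul_pow, vandermondeProd_sq]
  rw [← sdiff_union_of_subset hB, union_sdiff_cancel_right hdisj, distProd_union_left hdisj,
    distProd_union_right hdisj, distProd_union_right hdisj, distProd_comm (range N \ B) B]
  ring

end VandermondeProd

section Counting

theorem finite_setOf_bounded_of_support_subset {α : Type*} (s : Finset α) (k : ℕ) :
    {T : α → ℕ | (∀ c ∈ s, T c < k) ∧ ∀ c ∉ s, T c = 0}.Finite := by
  refine Set.Finite.of_injOn (f := fun T (c : s) => T c) (t := {g : s → ℕ | ∀ c, g c ∈ Set.Iio k})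
    (fun T hT c => hT.1 c c.2) (fun T hT U hU h => funext fun c => ?_)
    (Set.Finite.pi' fun _ => Set.finite_Iio k)
  by_cases hc : c ∈ s
  · exact congrFun h ⟨c, hc⟩
  · rw [hT.2 c hc, hU.2 c hc]

theorem ncard_eq_sum_ncard_fiber {α ι : Type*} {S : Set α} (hS : S.Finite) {I : Finset ι}
    {f : α → ι} (hf : Set.MapsTo f S I) : S.ncard = ∑ i ∈ I, {x ∈ S | f x = i}.ncard := by
  classical
  lift S to Finset α using hS
  rw [Set.ncard_coe_finset, card_eq_sum_card_fiberwise hf]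
  refine sum_congr rfl fun i _ => ?_
  rw [← Set.ncard_coe_finset]
  simp

end Counting

section LinearExtensions

/-- A linear extension of the finite subset `s` of a poset: an order preserving bijection from `s`
onto `{0, …, #s - 1}`, extended by zero outside `s`. -/
structure IsLinearExtension {α : Type*} [Preorder α] (s : Finset α) (T : α → ℕ) : Prop where
  bijOn : Set.BijOn T s (range #s)
  strictMonoOn : StrictMonoOn T s
  eq_zero : ∀ c ∉ s, T c = 0

/-- The number of linear extensions of `s`. -/
noncomputable def linExtCount {α : Type*} [Preorder α] (s : Finset α) : ℕ :=
  {T | IsLinearExtension s T}.ncard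

namespace IsLinearExtension

variable {α : Type*} [Preorder α] {s t : Finset α} {T U : α → ℕ}

theorem of_injOn (maps : ∀ c ∈ s, T c < #s) (inj : Set.InjOn T s) (mono : StrictMonoOn T s)
    (zero : ∀ c ∉ s, T c = 0) : IsLinearExtension s T where
  bijOn := by
    have mapsTo : Set.MapsTo T s (range #s) := fun c hc => by simpa using maps c hc
    exact ⟨mapsTo, inj, surjOn_of_injOn_of_card_le T mapsTo inj (by simp)⟩
  strictMonoOn := mono
  eq_zero := zero

theorem lt_card (hT : IsLinearExtension s T) {c : α} (hc : c ∈ s) : T c < #s :=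
  mem_range.1 (hT.bijOn.mapsTo hc)

theorem finite (s : Finset α) : {T | IsLinearExtension s T}.Finite :=
  (finite_setOf_bounded_of_support_subset s #s).subset fun _ hT =>
    ⟨fun _ => hT.lt_card, hT.eq_zero⟩

variable [DecidableEq α]

theorem restrict (hT : IsLinearExtension s T) (hts : t ⊆ s) (h : ∀ c ∈ s, (T c < #t ↔ c ∈ t)) :
    IsLinearExtension t (fun c => if c ∈ t then T c else 0) := by
  refine of_injOn (fun c hc => ?_) (fun c hc d hd hcd => ?_) (fun c hc d hd hcd => ?_)
    fun c hc => if_neg hc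
  · grind
  · exact hT.bijOn.injOn (hts hc) (hts hd) (by simpa [mem_coe.1 hc, mem_coe.1 hd] using hcd)
  · simpa [mem_coe.1 hc, mem_coe.1 hd] using hT.strictMonoOn (hts hc) (hts hd) hcd

theorem restrict_sdiff (hT : IsLinearExtension s T) (hts : t ⊆ s)
    (h : ∀ c ∈ s, (T c < #t ↔ c ∈ t)) :
    IsLinearExtension (s \ t) (fun c => if c ∈ s \ t then T c - #t else 0) := by
  have above (c) (hc : c ∈ s \ t) : #t ≤ T c := by grind
  refine of_injOn (fun c hc => ?_) (fun c hc d hd hcd => ?_) (fun c hc d hd hcd => ?_)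
    fun c hc => if_neg hc
  · have := hT.lt_card (sdiff_subset hc)
    rw [if_pos hc, card_sdiff_of_subset hts]
    have := above c hc
    omega
  · have := above c hc
    have := above d hd
    refine hT.bijOn.injOn (sdiff_subset hc) (sdiff_subset hd) ?_
    simp only [if_pos (mem_coe.1 hc), if_pos (mem_coe.1 hd)] at hcd
    omega
  · have := above c hc
    have := hT.strictMonoOn (sdiff_subset hc) (sdiff_subset hd) hcd
    simp only [if_pos (mem_coe.1 hc), if_pos (mem_coe.1 hd)]
    omega

theorem glue (hts : t ⊆ s) (lower : ∀ c ∈ s, ∀ d ∈ t, c < d → c ∈ t)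
    (hT : IsLinearExtension t T) (hU : IsLinearExtension (s \ t) U) :
    IsLinearExtension s (fun c => if c ∈ t then T c else if c ∈ s then #t + U c else 0) := by
  have hcard := card_sdiff_add_card_eq_card hts
  have hTlt (c) (hc : c ∈ t) : T c < #t := hT.lt_card hc
  have hUlt (c) (hc : c ∈ s \ t) : U c < #(s \ t) := hU.lt_card hc
  refine of_injOn (fun c hc => by grind) (fun c hc d hd hcd => ?_) (fun c hc d hd hcd => ?_)
    fun c hc => by grind
  · have hTinj := hT.bijOn.injOn
    have hUinj := hU.bijOn.injOn
    grind [Set.InjOn]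
  · have hTmono := hT.strictMonoOn
    have hUmono := hU.strictMonoOn
    grind [StrictMonoOn]

end IsLinearExtension

variable {α : Type*} [Preorder α]

theorem ncard_isLinearExtension_lower [DecidableEq α] {s t : Finset α} (hts : t ⊆ s)
    (lower : ∀ c ∈ s, ∀ d ∈ t, c < d → c ∈ t) :
    {T | IsLinearExtension s T ∧ ∀ c ∈ s, (T c < #t ↔ c ∈ t)}.ncard
      = linExtCount t * linExtCount (s \ t) := by
  rw [linExtCount, linExtCount, ← Set.ncard_prod]
  refine Set.BijOn.ncard_eq (f := fun T => (fun c => if c ∈ t then T c else 0,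
    fun c => if c ∈ s \ t then T c - #t else 0)) (Set.InvOn.bijOn
      (f' := fun P c => if c ∈ t then P.1 c else if c ∈ s then #t + P.2 c else 0) ⟨?_, ?_⟩ ?_ ?_)
  · rintro T ⟨hT, h⟩
    funext c
    have := hT.eq_zero c
    grind
  · rintro ⟨T, U⟩ ⟨hT, hU⟩
    have := hT.eq_zero
    have := hU.eq_zero
    refine Prod.ext (funext fun c => ?_) (funext fun c => ?_) <;> grind
  · exact fun T ⟨hT, h⟩ => ⟨hT.restrict hts h, hT.restrict_sdiff hts h⟩
  · rintro ⟨T, U⟩ ⟨hT, hU⟩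
    exact ⟨hT.glue hts lower hU, fun c hc => by have := hT.lt_card (c := c); grind⟩

theorem linExtCount_le_of_strictAntiOn {β : Type*} [Preorder β] {s : Finset α} {t : Finset β}
    {e : α → β} (he : Set.BijOn e s t) (anti : StrictAntiOn e s) :
    linExtCount t ≤ linExtCount s := by
  classical
  have hcard : #s = #t := by
    simpa using he.ncard_eq
  refine Set.ncard_le_ncard_of_injOn (fun T c => if c ∈ s then #s - 1 - T (e c) else 0)
    (fun T hT => ?_) (fun T hT U hU h => funext fun d => ?_) (IsLinearExtension.finite s)
  · have hlt (c) (hc : c ∈ s) : T (e c) < #s := hcard ▸ hT.lt_card (he.mapsTo hc)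
    refine .of_injOn (fun c hc => ?_) (fun c hc d hd hcd => ?_) (fun c hc d hd hcd => ?_)
      fun c hc => if_neg hc
    · grind
    · refine he.injOn hc hd (hT.bijOn.injOn (he.mapsTo hc) (he.mapsTo hd) ?_)
      grind
    · have := hT.strictMonoOn (he.mapsTo hd) (he.mapsTo hc) (anti hc hd hcd)
      grind
  · by_cases hd : d ∈ t
    · obtain ⟨c, hc, rfl⟩ := he.surjOn hd
      have := congrFun h c
      have := hT.lt_card hd
      have := hU.lt_card hd
      grind
    · rw [hT.eq_zero d hd, hU.eq_zero d hd]

theorem linExtCount_empty : linExtCount (∅ : Finset α) = 1 :=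
  Set.ncard_eq_one.2 ⟨0, Set.eq_singleton_iff_unique_mem.2
    ⟨.of_injOn (by simp) (by simp) (by simp [StrictMonoOn]) (by simp),
      fun _ hT => funext fun d => hT.eq_zero d (notMem_empty d)⟩⟩

theorem linExtCount_singleton (c : α) : linExtCount {c} = 1 := by
  classical
  refine Set.ncard_eq_one.2 ⟨0, Set.eq_singleton_iff_unique_mem.2
    ⟨?_, fun T hT => funext fun d => ?_⟩⟩
  · exact .of_injOn (by simp) (by simp) (by simp [StrictMonoOn]) (by simp)
  · by_cases hd : d ∈ ({c} : Finset α)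
    · simpa using hT.lt_card hd
    · exact hT.eq_zero d hd

/-- The largest value is taken at a maximal element, and removing it leaves a linear extension. -/
theorem linExtCount_eq_sum_erase [DecidableEq α] {s : Finset α}
    [DecidablePred (Maximal (· ∈ s))] (hs : s.Nonempty) :
    linExtCount s = ∑ c ∈ s with Maximal (· ∈ s) c, linExtCount (s.erase c) := by
  have : Nonempty α := hs.to_type
  have card_pos : 0 < #s := hs.card_pos
  let top (T : α → ℕ) : α := Function.invFunOn T s (#s - 1)
  have top_mem {T : α → ℕ} (hT : IsLinearExtension s T) : top T ∈ s ∧ T (top T) = #s - 1 :=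
    Function.invFunOn_pos (hT.bijOn.surjOn (by simpa using card_pos))
  have top_maximal {T : α → ℕ} (hT : IsLinearExtension s T) : Maximal (· ∈ s) (top T) := by
    refine ⟨(top_mem hT).1, fun d hd hle => by_contra fun hnot => ?_⟩
    have := hT.strictMonoOn (top_mem hT).1 hd (lt_of_le_not_ge hle hnot)
    have := (top_mem hT).2
    have := hT.lt_card hd
    omega
  rw [linExtCount, ncard_eq_sum_ncard_fiber (f := top) (IsLinearExtension.finite s)
    fun T hT => mem_coe.2 (mem_filter.2 ⟨(top_mem hT).1, top_maximal hT⟩)]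
  refine sum_congr rfl fun c hc => ?_
  obtain ⟨hcs, hmax⟩ := mem_filter.1 hc
  have fiber : {T ∈ {T | IsLinearExtension s T} | top T = c}
      = {T | IsLinearExtension s T ∧ ∀ d ∈ s, (T d < #(s.erase c) ↔ d ∈ s.erase c)} := by
    ext T
    refine and_congr_right fun hT => ?_
    obtain ⟨htop, hval⟩ := top_mem hT
    rw [card_erase_of_mem hcs]
    constructor
    · rintro rfl d hd
      have := hT.lt_card hd
      have := hT.bijOn.injOn hd htop
      grind
    · intro h
      have := (h (top T) htop)
      grind
  rw [fiber, ncard_isLinearExtension_lower (erase_subset c s), sdiff_erase_self hcs,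
    linExtCount_singleton, mul_one]
  intro a ha b hb hab
  exact mem_erase.2 ⟨fun h => hmax.not_gt (mem_of_mem_erase hb) (h ▸ hab), ha⟩

end LinearExtensions

section Diagrams

theorem mem_rect {m n i j : ℕ} : (i, j) ∈ rect m n ↔ i < m ∧ j < n := by
  rw [← mem_cells, rect, mem_product, mem_range, mem_range]

theorem card_rect (m n : ℕ) : (rect m n).card = m * n := by
  simp [YoungDiagram.card, rect]

theorem rowLen_eq_of_mem_iff {μ : YoungDiagram} {i k : ℕ} (h : ∀ j, (i, j) ∈ μ ↔ j < k) :
    μ.rowLen i = k :=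
  eq_of_forall_lt_iff fun j => mem_iff_lt_rowLen.symm.trans (h j)

theorem rowLen_eq_zero_iff {μ : YoungDiagram} {i : ℕ} : μ.rowLen i = 0 ↔ μ.colLen 0 ≤ i := by
  rw [← not_iff_not, ← ne_eq, Nat.ne_zero_iff_zero_lt, ← mem_iff_lt_rowLen, mem_iff_lt_colLen,
    not_le]

theorem le_rect_iff {μ : YoungDiagram} {m n : ℕ} :
    μ ≤ rect m n ↔ μ.colLen 0 ≤ m ∧ μ.rowLen 0 ≤ n := by
  constructor
  · intro h
    constructor <;> by_contra! hlt
    · exact absurd (mem_rect.1 (h (mem_iff_lt_colLen.2 hlt))).1 (lt_irrefl m)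
    · exact absurd (mem_rect.1 (h (mem_iff_lt_rowLen.2 hlt))).2 (lt_irrefl n)
  · rintro ⟨hm, hn⟩ ⟨i, j⟩ hij
    exact mem_rect.2
      ⟨(mem_iff_lt_colLen.1 (μ.up_left_mem le_rfl j.zero_le hij)).trans_le hm,
        (mem_iff_lt_rowLen.1 (μ.up_left_mem i.zero_le le_rfl hij)).trans_le hn⟩

theorem strictMonoOn_iff_adjacent {μ : YoungDiagram} {T : ℕ × ℕ → ℕ} :
    StrictMonoOn T μ.cells ↔
      (∀ i j, (i, j + 1) ∈ μ → T (i, j) < T (i, j + 1)) ∧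
        ∀ i j, (i + 1, j) ∈ μ → T (i, j) < T (i + 1, j) := by
  refine ⟨fun h => ⟨fun i j hij => ?_, fun i j hij => ?_⟩, fun ⟨hrow, hcol⟩ => ?_⟩
  · exact h (μ.up_left_mem le_rfl j.le_succ hij) hij (by simp [Prod.lt_iff])
  · exact h (μ.up_left_mem i.le_succ le_rfl hij) hij (by simp [Prod.lt_iff])
  have row_mono (i j k) (_ : j ≤ k) (hk : (i, k) ∈ μ) : T (i, j) + k ≤ T (i, k) + j := by
    induction k, ‹j ≤ k› using Nat.le_induction with
    | base => rfl
    | succ k _ ih =>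
      have := ih (μ.up_left_mem le_rfl k.le_succ hk)
      have := hrow i k hk
      omega
  have col_mono (i j k) (_ : i ≤ j) (hj : (j, k) ∈ μ) : T (i, k) + j ≤ T (j, k) + i := by
    induction j, ‹i ≤ j› using Nat.le_induction with
    | base => rfl
    | succ j _ ih =>
      have := ih (μ.up_left_mem j.le_succ le_rfl hj)
      have := hcol j k hj
      omega
  rintro ⟨i, j⟩ - ⟨i', j'⟩ hd hlt
  obtain ⟨hi, hj⟩ := Prod.mk_le_mk.1 hlt.le
  have := row_mono i j j' hj (μ.up_left_mem hi le_rfl hd)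
  have := col_mono i i' j' hi hd
  have : ¬ (i' ≤ i ∧ j' ≤ j) := fun h => hlt.not_ge (Prod.mk_le_mk.2 h)
  omega

theorem isSyt_iff_isLinearExtension {μ : YoungDiagram} {T : ℕ × ℕ → ℕ} :
    IsSyt μ T ↔ IsLinearExtension μ.cells T :=
  ⟨fun ⟨hbij, hrow, hcol, hzero⟩ => ⟨hbij, strictMonoOn_iff_adjacent.2 ⟨hrow, hcol⟩, hzero⟩,
    fun ⟨hbij, hmono, hzero⟩ =>
      ⟨hbij, (strictMonoOn_iff_adjacent.1 hmono).1, (strictMonoOn_iff_adjacent.1 hmono).2, hzero⟩⟩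

theorem sytCount_eq_linExtCount (μ : YoungDiagram) : sytCount μ = linExtCount μ.cells := by
  simp only [sytCount, linExtCount, isSyt_iff_isLinearExtension]

end Diagrams

section Rotation

/-- Rotation of the `m × n` rectangle by 180°. -/
def rotate (m n : ℕ) (c : ℕ × ℕ) : ℕ × ℕ := (m - 1 - c.1, n - 1 - c.2)

variable {m n : ℕ} {μ : YoungDiagram} {c : ℕ × ℕ}

theorem mem_complement : c ∈ complement m n μ ↔ c ∈ rect m n ∧ rotate m n c ∉ μ := by
  obtain ⟨i, j⟩ := c
  rw [← mem_cells, complement, mem_filter, mem_product, mem_range, mem_range, mem_rect, rotate,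
    mem_iff_lt_rowLen]
  simp only
  omega

theorem rotate_mem_rect (hc : c ∈ rect m n) : rotate m n c ∈ rect m n := by
  obtain ⟨i, j⟩ := c
  rw [rotate, mem_rect]
  have := mem_rect.1 hc
  omega

theorem rotate_rotate (hc : c ∈ rect m n) : rotate m n (rotate m n c) = c := by
  obtain ⟨i, j⟩ := c
  have := mem_rect.1 hc
  simp only [rotate, Prod.mk.injEq]
  omega

theorem strictAntiOn_rotate : StrictAntiOn (rotate m n) (rect m n).cells := by
  rintro ⟨i, j⟩ hc ⟨i', j'⟩ hd hlt
  have := mem_rect.1 hc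
  have := mem_rect.1 hd
  rw [Prod.mk_lt_mk] at hlt
  rw [rotate, rotate, Prod.mk_lt_mk]
  omega

theorem complement_le_rect : complement m n μ ≤ rect m n := fun _ hc => (mem_complement.1 hc).1

theorem bijOn_rotate_complement :
    Set.BijOn (rotate m n) (complement m n μ).cells ↑((rect m n).cells \ μ.cells) ∧
      Set.BijOn (rotate m n) ↑((rect m n).cells \ μ.cells) (complement m n μ).cells := by
  have to_sdiff : Set.MapsTo (rotate m n) (complement m n μ).cells
      ↑((rect m n).cells \ μ.cells) := fun c hc => by
    obtain ⟨hrect, hnot⟩ := mem_complement.1 hc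
    exact mem_coe.2 (mem_sdiff.2 ⟨rotate_mem_rect hrect, hnot⟩)
  have of_sdiff : Set.MapsTo (rotate m n) ↑((rect m n).cells \ μ.cells)
      (complement m n μ).cells := fun c hc => by
    obtain ⟨hrect, hnot⟩ := mem_sdiff.1 (mem_coe.1 hc)
    exact mem_complement.2 ⟨rotate_mem_rect hrect, (rotate_rotate hrect).symm ▸ hnot⟩
  have inv : Set.InvOn (rotate m n) (rotate m n) (complement m n μ).cells
      ↑((rect m n).cells \ μ.cells) :=
    ⟨fun c hc => rotate_rotate (complement_le_rect hc),
      fun c hc => rotate_rotate (sdiff_subset hc)⟩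
  exact ⟨inv.bijOn to_sdiff of_sdiff, inv.symm.bijOn of_sdiff to_sdiff⟩

theorem card_complement_add_card (hμ : μ ≤ rect m n) :
    (complement m n μ).card + μ.card = m * n := by
  have hcard : #(complement m n μ).cells = #((rect m n).cells \ μ.cells) := by
    simpa only [Set.ncard_coe_finset] using bijOn_rotate_complement.1.ncard_eq
  rw [← card_rect, YoungDiagram.card, hcard, card_sdiff_add_card_eq_card (cells_subset_iff.2 hμ)]

theorem linExtCount_rect_sdiff :
    linExtCount ((rect m n).cells \ μ.cells) = sytCount (complement m n μ) := by
  rw [sytCount_eq_linExtCount]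
  exact le_antisymm
    (linExtCount_le_of_strictAntiOn bijOn_rotate_complement.1
      (strictAntiOn_rotate.mono (cells_subset_iff.2 complement_le_rect)))
    (linExtCount_le_of_strictAntiOn bijOn_rotate_complement.2
      (strictAntiOn_rotate.mono (coe_subset.2 sdiff_subset)))

theorem ncard_isSyt_rect_restrict (hμ : μ ≤ rect m n) :
    {T | IsSyt (rect m n) T ∧ ∀ c, c ∈ rect m n → (T c < μ.card ↔ c ∈ μ)}.ncard
      = sytCount μ * sytCount (complement m n μ) := by
  rw [← linExtCount_rect_sdiff, sytCount_eq_linExtCount, ← ncard_isLinearExtension_lower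
    (cells_subset_iff.2 hμ) fun c _ d hd hcd => μ.isLowerSet hcd.le hd]
  simp only [isSyt_iff_isLinearExtension, YoungDiagram.card, mem_cells]

end Rotation

section Beta

/-- The beta numbers (first column hook lengths) of a Young diagram `μ` with at most `m` rows, in
increasing order: `i ↦ μ_{m-i} + i` in the usual one-based notation for the rows. -/
def beta (m : ℕ) (μ : YoungDiagram) (i : Fin m) : ℕ := μ.rowLen i.rev + i

/-- The beta numbers of `μ` as a set: the positions of the vertical steps in the boundary lattice
path of `μ`. -/
def betaSet (m : ℕ) (μ : YoungDiagram) : Finset ℕ := univ.image (beta m μ)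

variable {m n : ℕ} {μ : YoungDiagram}

theorem rowLen_rev_monotone (m : ℕ) (μ : YoungDiagram) :
    Monotone fun i : Fin m => μ.rowLen i.rev :=
  fun _ _ h => μ.rowLen_anti _ _ (Fin.rev_le_rev.2 h)

theorem beta_strictMono (m : ℕ) (μ : YoungDiagram) : StrictMono (beta m μ) :=
  (rowLen_rev_monotone m μ).add_strictMono Fin.val_strictMono

theorem sum_rowLen_rev (hμ : μ.colLen 0 ≤ m) : ∑ i : Fin m, μ.rowLen i.rev = μ.card := by
  have mapsTo : Set.MapsTo Prod.fst (μ.cells : Set (ℕ × ℕ)) (range m) := fun c hc =>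
    mem_range.2 ((mem_iff_lt_colLen.1 (μ.up_left_mem le_rfl c.2.zero_le hc)).trans_le hμ)
  calc ∑ i : Fin m, μ.rowLen i.rev
      = ∑ i ∈ range m, μ.rowLen i :=
        (Equiv.sum_comp Fin.revPerm fun i : Fin m => μ.rowLen i).trans
          (Fin.sum_univ_eq_sum_range _ m)
    _ = μ.card := by
        rw [YoungDiagram.card, card_eq_sum_card_fiberwise mapsTo]
        simp_rw [rowLen_eq_card, YoungDiagram.row]

theorem sum_beta_sub (hμ : μ.colLen 0 ≤ m) :
    ∑ i : Fin m, ((beta m μ i : ℤ) - (i : ℕ)) = μ.card := by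
  simp only [← sum_rowLen_rev hμ, beta, Nat.cast_add, add_sub_cancel_right, Nat.cast_sum]

theorem prod_betaSet {M : Type*} [CommMonoid M] (m : ℕ) (μ : YoungDiagram) (f : ℕ → M) :
    ∏ a ∈ betaSet m μ, f a = ∏ i, f (beta m μ i) :=
  prod_image (beta_strictMono m μ).injective.injOn

theorem cast_vandermondeProd_betaSet (m : ℕ) (μ : YoungDiagram) :
    (vandermondeProd (betaSet m μ) : ℤ) = (Matrix.vandermonde fun i => (beta m μ i : ℤ)).det :=
  cast_vandermondeProd_image_univ (beta_strictMono m μ)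

theorem betaSet_of_forall_rowLen_eq (h : ∀ i < m, μ.rowLen i = n) :
    betaSet m μ = (range m).image (n + ·) := by
  ext a
  simp only [betaSet, mem_image, mem_univ, true_and, mem_range]
  constructor
  · rintro ⟨i, rfl⟩
    exact ⟨i, i.2, by rw [beta, h _ i.rev.2]⟩
  · rintro ⟨i, hi, rfl⟩
    exact ⟨⟨i, hi⟩, by rw [beta, h _ (Fin.rev _).2]⟩

end Beta

section Corners

variable {m : ℕ} {μ : YoungDiagram} {c : ℕ × ℕ}

/-- The Young diagram of the cells of `μ` that are not weakly below and to the right of `c`; for a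
corner `c` this removes just `c`. -/
def deleteAbove (μ : YoungDiagram) (c : ℕ × ℕ) : YoungDiagram where
  cells := {d ∈ μ.cells | ¬ c ≤ d}
  isLowerSet a b hba ha := by
    simp only [coe_filter, Set.mem_ofPred_eq] at ha ⊢
    exact ⟨μ.isLowerSet hba ha.1, fun hcb => ha.2 (hcb.trans hba)⟩

theorem cells_deleteAbove (hc : Maximal (· ∈ μ.cells) c) :
    (deleteAbove μ c).cells = μ.cells.erase c := by
  ext d
  simp only [deleteAbove, mem_filter, mem_erase]
  exact ⟨fun ⟨hd, hcd⟩ => ⟨fun h => hcd h.ge, hd⟩,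
    fun ⟨hne, hd⟩ => ⟨hd, fun hcd => hne (hc.eq_of_le hd hcd).symm⟩⟩

/-- The last cell of row `i` of `μ`; the junk value `(i, 0)` if the row is empty. -/
def lastCell (μ : YoungDiagram) (i : ℕ) : ℕ × ℕ := (i, μ.rowLen i - 1)

theorem maximal_mem_cells_iff {i j : ℕ} :
    Maximal (· ∈ μ.cells) (i, j) ↔ μ.rowLen i = j + 1 ∧ μ.rowLen (i + 1) ≤ j := by
  simp only [mem_cells]
  constructor
  · intro h
    have mem : j < μ.rowLen i := mem_iff_lt_rowLen.1 h.prop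
    have right : (i, j + 1) ∉ μ := h.not_prop_of_gt (by simp [Prod.lt_iff])
    have below : (i + 1, j) ∉ μ := h.not_prop_of_gt (by simp [Prod.lt_iff])
    rw [mem_iff_lt_rowLen, not_lt] at right below
    omega
  · rintro ⟨hrow, hbelow⟩
    refine ⟨mem_iff_lt_rowLen.2 (by omega), fun ⟨i', j'⟩ hd hle => ?_⟩
    obtain ⟨hi, hj⟩ := Prod.mk_le_mk.1 hle
    have hd' := mem_iff_lt_rowLen.1 hd
    obtain rfl | hi := hi.eq_or_lt
    · exact Prod.mk_le_mk.2 ⟨le_rfl, by omega⟩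
    · have := μ.rowLen_anti (i + 1) i' hi
      omega

theorem card_deleteAbove_add_one (hc : Maximal (· ∈ μ.cells) c) :
    (deleteAbove μ c).card + 1 = μ.card := by
  rw [YoungDiagram.card, cells_deleteAbove hc, card_erase_add_one hc.prop]

theorem maximal_lastCell_iff {i : ℕ} :
    Maximal (· ∈ μ.cells) (lastCell μ i) ↔ μ.rowLen (i + 1) < μ.rowLen i := by
  rw [lastCell, maximal_mem_cells_iff]
  omega

theorem lastCell_eq_of_maximal (hc : Maximal (· ∈ μ.cells) c) : lastCell μ c.1 = c := by
  rw [lastCell, (maximal_mem_cells_iff.1 hc).1, Nat.add_sub_cancel]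

theorem rowLen_deleteAbove {i j : ℕ} (hc : Maximal (· ∈ μ.cells) (i, j)) :
    (deleteAbove μ (i, j)).rowLen = Function.update μ.rowLen i j := by
  have hrow := (maximal_mem_cells_iff.1 hc).1
  funext k
  refine rowLen_eq_of_mem_iff fun l => ?_
  rw [← mem_cells, cells_deleteAbove hc, mem_erase, mem_cells, mem_iff_lt_rowLen, ne_eq,
    Prod.mk.injEq]
  by_cases hk : k = i
  · subst hk
    rw [Function.update_self]
    omega
  · rw [Function.update_of_ne hk]
    tauto

open scoped Classical in
theorem sytCount_eq_sum_deleteAbove (hμ : μ.cells.Nonempty) :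
    sytCount μ = ∑ c ∈ μ.cells with Maximal (· ∈ μ.cells) c, sytCount (deleteAbove μ c) := by
  simp_rw [sytCount_eq_linExtCount]
  rw [linExtCount_eq_sum_erase hμ]
  exact sum_congr rfl fun c hc => by rw [cells_deleteAbove (mem_filter.1 hc).2]

theorem deleteAbove_le (μ : YoungDiagram) (c : ℕ × ℕ) : deleteAbove μ c ≤ μ :=
  filter_subset _ _

theorem colLen_mono {μ ν : YoungDiagram} (h : ν ≤ μ) (j : ℕ) : ν.colLen j ≤ μ.colLen j :=
  le_of_forall_lt fun _ hi => mem_iff_lt_colLen.1 (h (mem_iff_lt_colLen.2 hi))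

theorem beta_deleteAbove {k : Fin m} (hc : Maximal (· ∈ μ.cells) (lastCell μ k.rev)) :
    beta m (deleteAbove μ (lastCell μ k.rev))
      = Function.update (beta m μ) k (beta m μ k - 1) := by
  have hrow := maximal_lastCell_iff.1 hc
  funext i
  rw [beta, lastCell, rowLen_deleteAbove hc]
  by_cases hi : i = k
  · subst hi
    rw [Function.update_self, Function.update_self, beta]
    omega
  · have hrev : (i.rev : ℕ) ≠ k.rev := fun h => hi (Fin.rev_injective (Fin.val_injective h))
    rw [Function.update_of_ne hi, Function.update_of_ne hrev, beta]

/-- Lowering the beta number of a row whose last cell is not a corner yields a repeated beta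
number, or else the beta number was zero. -/
theorem beta_mul_det_vandermonde_update_eq_zero (hμ : μ.colLen 0 ≤ m) {k : Fin m}
    (hk : ¬ Maximal (· ∈ μ.cells) (lastCell μ k.rev)) :
    (beta m μ k : ℤ) * (Matrix.vandermonde
      (Function.update (fun i => (beta m μ i : ℤ)) k (beta m μ k - 1))).det = 0 := by
  have hrow : μ.rowLen (k.rev + 1) = μ.rowLen k.rev := by
    have := μ.rowLen_anti _ _ (Nat.le_add_right (k.rev : ℕ) 1)
    rw [maximal_lastCell_iff] at hk
    omega
  obtain hk0 | hk0 := (Nat.zero_le k).eq_or_lt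
  · have hrev : (k.rev : ℕ) + 1 = m := by rw [Fin.val_rev]; omega
    have : μ.rowLen k.rev = 0 := by rw [← hrow, hrev, rowLen_eq_zero_iff.2 hμ]
    rw [beta, this, ← hk0, Nat.cast_zero, zero_mul]
  · let k' : Fin m := ⟨k - 1, by omega⟩
    have hne : k' ≠ k := Fin.ne_of_val_ne (show (k : ℕ) - 1 ≠ k by omega)
    have hrev : (k'.rev : ℕ) = k.rev + 1 := by
      simp only [Fin.val_rev, k']
      omega
    have hbeta : (beta m μ k' : ℤ) = beta m μ k - 1 := by
      rw [beta, beta, hrev, hrow]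
      push_cast [k', Nat.cast_sub (Nat.succ_le_of_lt hk0)]
      ring
    rw [Matrix.det_zero_of_row_eq hne, mul_zero]
    funext j
    simp [Matrix.vandermonde_apply, Function.update_of_ne hne, hbeta]

end Corners

section Frobenius

variable {m : ℕ}

open scoped Classical in
theorem sum_maximal_cells_eq_sum_lastCell {M : Type*} [AddCommMonoid M] {μ : YoungDiagram}
    (hμ : μ.colLen 0 ≤ m) (f : ℕ × ℕ → M) :
    ∑ c ∈ μ.cells with Maximal (· ∈ μ.cells) c, f c
      = ∑ k : Fin m with Maximal (· ∈ μ.cells) (lastCell μ k.rev), f (lastCell μ k.rev) := by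
  symm
  refine sum_nbij (fun k : Fin m => lastCell μ k.rev) (fun k hk => ?_)
    (fun k _ l _ hkl => ?_) (fun c hc => ?_) fun _ _ => rfl
  · have := (mem_filter.1 hk).2
    exact mem_filter.2 ⟨this.prop, this⟩
  · exact Fin.rev_injective (Fin.val_injective (Prod.mk.inj hkl).1)
  · obtain ⟨hmem, hmax⟩ := mem_filter.1 hc
    have hi : c.1 < m :=
      (mem_iff_lt_colLen.1 (μ.up_left_mem le_rfl c.2.zero_le hmem)).trans_le hμ
    have hlast : lastCell μ (⟨c.1, hi⟩ : Fin m).rev.rev = c := by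
      rw [Fin.rev_rev, lastCell_eq_of_maximal hmax]
    exact ⟨(⟨c.1, hi⟩ : Fin m).rev, by simpa only [coe_filter, mem_univ, true_and, hlast,
      Set.mem_ofPred_eq] using hmax, hlast⟩

theorem prod_factorial_update_pred {ι : Type*} [Fintype ι] [DecidableEq ι] {b : ι → ℕ} {k : ι}
    (hk : b k ≠ 0) : ∏ i, (b i)! = b k * ∏ i, (Function.update b k (b k - 1) i)! := by
  have off (i : ι) (hi : i ∈ univ.erase k) : Function.update b k (b k - 1) i = b i :=
    Function.update_of_ne (ne_of_mem_erase hi) _ _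
  rw [← mul_prod_erase univ _ (mem_univ k), ← mul_prod_erase univ (fun i => (_ : ℕ)!) (mem_univ k),
    Function.update_self, ← mul_assoc, Nat.mul_factorial_pred hk]
  exact congrArg _ (prod_congr rfl fun i hi => by rw [off i hi])

theorem prod_factorial_beta_eq_mul_deleteAbove {μ : YoungDiagram} {k : Fin m}
    (hk : Maximal (· ∈ μ.cells) (lastCell μ k.rev)) :
    ∏ i, (beta m μ i)!
      = beta m μ k * ∏ i, (beta m (deleteAbove μ (lastCell μ k.rev)) i)! := by
  have hrow := maximal_lastCell_iff.1 hk
  rw [beta_deleteAbove hk]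
  exact prod_factorial_update_pred (by rw [beta]; omega)

theorem cast_beta_deleteAbove {μ : YoungDiagram} {k : Fin m}
    (hk : Maximal (· ∈ μ.cells) (lastCell μ k.rev)) :
    (fun i => (beta m (deleteAbove μ (lastCell μ k.rev)) i : ℤ))
      = Function.update (fun i => (beta m μ i : ℤ)) k (beta m μ k - 1) := by
  have hpos : 0 < beta m μ k := by
    have := maximal_lastCell_iff.1 hk
    rw [beta]
    omega
  rw [beta_deleteAbove hk, ← Nat.cast_pred hpos]
  exact Function.comp_update ((↑) : ℕ → ℤ) (beta m μ) k _

/-- **Frobenius formula** for `f^μ` in terms of the beta numbers. -/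
theorem sytCount_mul_prod_factorial_beta {μ : YoungDiagram} (hμ : μ.colLen 0 ≤ m) :
    (sytCount μ : ℤ) * ∏ i : Fin m, ((beta m μ i)! : ℤ)
      = μ.card ! * (Matrix.vandermonde fun i => (beta m μ i : ℤ)).det := by
  classical
  induction hp : μ.card generalizing μ with
  | zero =>
    have hcells : μ.cells = ∅ := card_eq_zero.1 hp
    have hrow (i : ℕ) (_ : i < m) : μ.rowLen i = 0 :=
      rowLen_eq_of_mem_iff fun j => by simp [← mem_cells, hcells]
    rw [← cast_vandermondeProd_betaSet, ← Nat.cast_prod, ← prod_betaSet,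
      betaSet_of_forall_rowLen_eq hrow, sytCount_eq_linExtCount, hcells, linExtCount_empty]
    simp [vandermondeProd_range]
  | succ p ih =>
    have hne : μ.cells.Nonempty := card_pos.1 (p.succ_pos.trans_eq hp.symm)
    have corner (k : Fin m) (hk : Maximal (· ∈ μ.cells) (lastCell μ k.rev)) :
        (sytCount (deleteAbove μ (lastCell μ k.rev)) : ℤ) * ∏ i, ((beta m μ i)! : ℤ)
          = p ! * (beta m μ k * (Matrix.vandermonde
            (Function.update (fun i => (beta m μ i : ℤ)) k (beta m μ k - 1))).det) := by
      have hcard := card_deleteAbove_add_one hk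
      rw [← Nat.cast_prod, prod_factorial_beta_eq_mul_deleteAbove hk, Nat.cast_mul, Nat.cast_prod,
        mul_left_comm, ih ((colLen_mono (deleteAbove_le _ _) 0).trans hμ) (by omega),
        cast_beta_deleteAbove hk, mul_left_comm]
    calc (sytCount μ : ℤ) * ∏ i : Fin m, ((beta m μ i)! : ℤ)
        = ∑ k : Fin m with Maximal (· ∈ μ.cells) (lastCell μ k.rev),
            (sytCount (deleteAbove μ (lastCell μ k.rev)) : ℤ) * ∏ i, ((beta m μ i)! : ℤ) := by
          rw [sytCount_eq_sum_deleteAbove hne, sum_maximal_cells_eq_sum_lastCell hμ, Nat.cast_sum,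
            sum_mul]
      _ = ∑ k : Fin m, p ! * (beta m μ k * (Matrix.vandermonde
            (Function.update (fun i => (beta m μ i : ℤ)) k (beta m μ k - 1))).det) := by
          rw [sum_congr rfl fun k hk => corner k (mem_filter.1 hk).2]
          refine sum_filter_of_ne fun k _ hne => ?_
          contrapose! hne
          rw [beta_mul_det_vandermonde_update_eq_zero hμ hne, mul_zero]
      _ = (p + 1)! * (Matrix.vandermonde fun i => (beta m μ i : ℤ)).det := by
          rw [← mul_sum, sum_mul_det_vandermonde_update_sub_one, sum_beta_sub hμ, hp,
            Nat.factorial_succ, Nat.cast_mul, mul_left_comm, mul_assoc]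

theorem sytCount_mul_prod_factorial_betaSet {μ : YoungDiagram} (hμ : μ.colLen 0 ≤ m) :
    sytCount μ * ∏ a ∈ betaSet m μ, a ! = μ.card ! * vandermondeProd (betaSet m μ) := by
  zify
  rw [prod_betaSet, cast_vandermondeProd_betaSet, sytCount_mul_prod_factorial_beta hμ]

end Frobenius

section Semistandard

variable {μ ν : YoungDiagram} {m k : ℕ}

theorem finite_setOf_ssyt_lt (μ : YoungDiagram) (k : ℕ) :
    {T : SemistandardYoungTableau μ | ∀ i j, (i, j) ∈ μ → T i j < k}.Finite := by
  refine Set.Finite.of_injOn (f := fun T (c : ℕ × ℕ) => T c.1 c.2) (fun T hT => ?_)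
    (fun _ _ _ _ h => ?_) (finite_setOf_bounded_of_support_subset μ.cells k)
  · exact ⟨fun c hc => hT c.1 c.2 hc, fun _ hc => T.zeros hc⟩
  · exact SemistandardYoungTableau.ext fun i j => congrFun h (i, j)

theorem ssytCount_zero_of_colLen_eq_zero (hμ : μ.colLen 0 = 0) : ssytCount μ 0 = 1 := by
  have notMem (i j : ℕ) : (i, j) ∉ μ := fun h => by
    have := mem_iff_lt_colLen.1 (μ.up_left_mem i.zero_le j.zero_le h)
    omega
  exact Set.ncard_eq_one.2 ⟨.highestWeight μ, Set.eq_singleton_iff_unique_mem.2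
    ⟨fun i j h => absurd h (notMem i j), fun T _ => SemistandardYoungTableau.ext fun i j => by
      rw [T.zeros (notMem i j), SemistandardYoungTableau.zeros _ (notMem i j)]⟩⟩

theorem row_le_ssyt_entry (T : SemistandardYoungTableau μ) {i j : ℕ} (h : (i, j) ∈ μ) :
    i ≤ T i j := by
  induction i with
  | zero => exact Nat.zero_le _
  | succ i ih =>
    exact (ih (μ.up_left_mem i.le_succ le_rfl h)).trans_lt (T.col_strict i.lt_succ_self h)

/-- The Young diagram of the cells of `T` with entry less than `k`. -/
def entriesBelow (T : SemistandardYoungTableau μ) (k : ℕ) : YoungDiagram where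
  cells := {c ∈ μ.cells | T c.1 c.2 < k}
  isLowerSet := by
    rintro ⟨i, j⟩ ⟨i', j'⟩ hle hc
    obtain ⟨hi, hj⟩ := Prod.mk_le_mk.1 hle
    obtain ⟨hmem, hlt⟩ := mem_filter.1 hc
    have hmem' : (i', j) ∈ μ := μ.up_left_mem hi le_rfl hmem
    exact mem_filter.2 ⟨μ.up_left_mem le_rfl hj hmem',
      ((T.row_weak_of_le hj hmem').trans (T.col_weak hi hmem)).trans_lt hlt⟩

theorem mem_entriesBelow {T : SemistandardYoungTableau μ} {i j : ℕ} :
    (i, j) ∈ entriesBelow T k ↔ (i, j) ∈ μ ∧ T i j < k :=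
  mem_filter

theorem colLen_entriesBelow_le (T : SemistandardYoungTableau μ) :
    (entriesBelow T k).colLen 0 ≤ k := by
  by_contra! hlt
  obtain ⟨hmem, hlt⟩ := mem_entriesBelow.1 (mem_iff_lt_colLen.2 hlt)
  exact (row_le_ssyt_entry T hmem).not_gt hlt

/-- The skew shape `μ / ν` is a horizontal strip: no two of its cells are in the same column. -/
def IsHorizontalStrip (ν μ : YoungDiagram) : Prop :=
  ν ≤ μ ∧ ∀ i j, (i + 1, j) ∈ μ → (i, j) ∈ ν

theorem isHorizontalStrip_entriesBelow {T : SemistandardYoungTableau μ}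
    (hT : ∀ i j, (i, j) ∈ μ → T i j < k + 1) : IsHorizontalStrip (entriesBelow T k) μ :=
  ⟨filter_subset _ _, fun i _ h => mem_entriesBelow.2 ⟨μ.up_left_mem i.le_succ le_rfl h,
    (T.col_strict i.lt_succ_self h).trans_le (Nat.le_of_lt_succ (hT _ _ h))⟩⟩

/-- The restriction of a tableau to a smaller shape. -/
def restrictSsyt (T : SemistandardYoungTableau μ) (h : ν ≤ μ) : SemistandardYoungTableau ν where
  entry i j := if (i, j) ∈ ν then T i j else 0
  row_weak' hj hc := by
    rw [if_pos hc, if_pos (ν.up_left_mem le_rfl hj.le hc)]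
    exact T.row_weak hj (h hc)
  col_strict' hi hc := by
    rw [if_pos hc, if_pos (ν.up_left_mem hi.le le_rfl hc)]
    exact T.col_strict hi (h hc)
  zeros' hc := if_neg hc

theorem restrictSsyt_apply (T : SemistandardYoungTableau μ) (h : ν ≤ μ) (i j : ℕ) :
    restrictSsyt T h i j = if (i, j) ∈ ν then T i j else 0 := rfl

/-- The extension of a tableau of shape `ν` to shape `μ` by a horizontal strip filled with `k`. -/
def extendSsyt (U : SemistandardYoungTableau ν) (hU : ∀ i j, (i, j) ∈ ν → U i j < k)
    (h : IsHorizontalStrip ν μ) : SemistandardYoungTableau μ where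
  entry i j := if (i, j) ∈ ν then U i j else if (i, j) ∈ μ then k else 0
  row_weak' {i j₁ j₂} hj hc := by
    rw [if_pos hc, if_pos (μ.up_left_mem le_rfl hj.le hc)]
    by_cases h₂ : (i, j₂) ∈ ν
    · rw [if_pos h₂, if_pos (ν.up_left_mem le_rfl hj.le h₂)]
      exact U.row_weak hj h₂
    · rw [if_neg h₂]
      split_ifs with h₁
      exacts [(hU _ _ h₁).le, le_rfl]
  col_strict' {i₁ i₂ j} hi hc := by
    have h₁ : (i₁, j) ∈ ν := h.2 _ _ (μ.up_left_mem hi le_rfl hc)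
    rw [if_pos h₁, if_pos hc]
    split_ifs with h₂
    exacts [U.col_strict hi h₂, hU _ _ h₁]
  zeros' hc := by rw [if_neg fun hν => hc (h.1 hν), if_neg hc]

theorem extendSsyt_apply (U : SemistandardYoungTableau ν) (hU : ∀ i j, (i, j) ∈ ν → U i j < k)
    (h : IsHorizontalStrip ν μ) (i j : ℕ) :
    extendSsyt U hU h i j = if (i, j) ∈ ν then U i j else if (i, j) ∈ μ then k else 0 := rfl

theorem ncard_ssyt_entriesBelow_eq (h : IsHorizontalStrip ν μ) :
    {T ∈ {T : SemistandardYoungTableau μ | ∀ i j, (i, j) ∈ μ → T i j < k + 1} |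
      entriesBelow T k = ν}.ncard = ssytCount ν k := by
  refine Set.ncard_congr (fun T _ => restrictSsyt T h.1) ?_ ?_ ?_
  · rintro T ⟨-, rfl⟩ i j hij
    rw [restrictSsyt_apply, if_pos hij]
    exact (mem_entriesBelow.1 hij).2
  · rintro T U ⟨hT, hTν⟩ ⟨hU, hUν⟩ hTU
    ext i j
    by_cases hν : (i, j) ∈ ν
    · simpa only [restrictSsyt_apply, if_pos hν] using congrFun (DFunLike.congr_fun hTU i) j
    by_cases hμ : (i, j) ∈ μ
    · have eq_k {V : SemistandardYoungTableau μ} (hV : ∀ i j, (i, j) ∈ μ → V i j < k + 1)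
          (hVν : entriesBelow V k = ν) : V i j = k :=
        le_antisymm (Nat.le_of_lt_succ (hV i j hμ))
          (not_lt.1 fun hlt => hν (hVν ▸ mem_entriesBelow.2 ⟨hμ, hlt⟩))
      rw [eq_k hT hTν, eq_k hU hUν]
    · rw [T.zeros hμ, U.zeros hμ]
  · intro U hU
    refine ⟨extendSsyt U hU h, ⟨fun i j hij => ?_, ?_⟩, ?_⟩
    · rw [extendSsyt_apply, if_pos hij]
      split_ifs with hν
      exacts [(hU i j hν).trans k.lt_succ_self, k.lt_succ_self]
    · ext ⟨i, j⟩
      rw [mem_cells, mem_cells, mem_entriesBelow, extendSsyt_apply]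
      have := hU i j
      have := h.1 (x := (i, j))
      grind
    · ext i j
      rw [restrictSsyt_apply, extendSsyt_apply]
      have := U.zeros (i := i) (j := j)
      grind

end Semistandard

section WeylDimension

variable {m : ℕ} {μ ν : YoungDiagram}

theorem eq_of_rowLen_rev_eq (hμ : μ.colLen 0 ≤ m) (hν : ν.colLen 0 ≤ m)
    (h : ∀ i : Fin m, μ.rowLen i.rev = ν.rowLen i.rev) : μ = ν := by
  ext ⟨i, j⟩
  rw [mem_cells, mem_cells, mem_iff_lt_rowLen, mem_iff_lt_rowLen]
  obtain hi | hi := lt_or_ge i m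
  · simpa using congrArg (j < ·) (h (Fin.rev ⟨i, hi⟩))
  · rw [rowLen_eq_zero_iff.2 (hμ.trans hi), rowLen_eq_zero_iff.2 (hν.trans hi)]

theorem exists_rowLen_rev_eq {q : Fin m → ℕ} (hq : Monotone q) :
    ∃ ν : YoungDiagram, ν.colLen 0 ≤ m ∧ ∀ i : Fin m, ν.rowLen i.rev = q i := by
  have anti : Antitone (q ∘ Fin.rev) := hq.comp_antitone Fin.rev_anti
  refine ⟨ofRowLens (List.ofFn (q ∘ Fin.rev)) anti.sortedGE_ofFn, ?_, fun i => ?_⟩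
  · refine le_of_forall_lt fun i hi => ?_
    obtain ⟨hlt, -⟩ := mem_ofRowLens.1 (mem_iff_lt_colLen.2 hi)
    simpa using hlt
  · refine rowLen_eq_of_mem_iff fun j => ?_
    simp only [mem_ofRowLens, List.length_ofFn, List.getElem_ofFn, Function.comp_apply, Fin.eta,
      Fin.rev_rev, Fin.is_lt, exists_true_left]

theorem isHorizontalStrip_iff_interlacing (hν : ν.colLen 0 ≤ m) (hμ : μ.colLen 0 ≤ m + 1) :
    IsHorizontalStrip ν μ ↔ (fun i : Fin m => ν.rowLen i.rev) ∈ Fintype.piFinset fun i : Fin m =>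
      Icc (μ.rowLen i.castSucc.rev) (μ.rowLen i.succ.rev) := by
  have rows : IsHorizontalStrip ν μ ↔
      ∀ i < m, μ.rowLen (i + 1) ≤ ν.rowLen i ∧ ν.rowLen i ≤ μ.rowLen i := by
    constructor
    · exact fun h i _ => ⟨le_of_forall_lt fun j hj => mem_iff_lt_rowLen.1
        (h.2 i j (mem_iff_lt_rowLen.2 hj)), le_of_forall_lt fun j hj => mem_iff_lt_rowLen.1
        (h.1 (mem_iff_lt_rowLen.2 hj))⟩
    · refine fun h => ⟨fun ⟨i, j⟩ hij => ?_, fun i j hij => ?_⟩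
      · have hi := (mem_iff_lt_colLen.1 (ν.up_left_mem le_rfl j.zero_le hij)).trans_le hν
        exact mem_iff_lt_rowLen.2 ((mem_iff_lt_rowLen.1 hij).trans_le (h i hi).2)
      · have hi := (mem_iff_lt_colLen.1 (μ.up_left_mem le_rfl j.zero_le hij)).trans_le hμ
        exact mem_iff_lt_rowLen.2 ((mem_iff_lt_rowLen.1 hij).trans_le (h i (by omega)).1)
  simp only [rows, Fintype.mem_piFinset, mem_Icc, Fin.rev_castSucc, Fin.rev_succ, Fin.val_succ,
    Fin.val_castSucc]
  exact ⟨fun h i => h _ i.rev.2, fun h i hi => by simpa using h (Fin.rev ⟨i, hi⟩)⟩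

theorem monotone_of_mem_piFinset_Icc {l : Fin (m + 1) → ℕ} (hl : Monotone l) {q : Fin m → ℕ}
    (hq : q ∈ Fintype.piFinset fun i : Fin m => Icc (l i.castSucc) (l i.succ)) : Monotone q := by
  have bounds (i) := mem_Icc.1 (Fintype.mem_piFinset.1 hq i)
  refine monotone_iff_forall_lt.2 fun i j hij => ?_
  exact (bounds i).2.trans ((hl (Fin.succ_le_castSucc_iff.2 hij)).trans (bounds j).1)

theorem cast_ssytCount_eq_det_choose (hμ : μ.colLen 0 ≤ m) :
    (ssytCount μ m : ℤ) = (Matrix.of fun i j : Fin m => ((beta m μ i).choose j : ℤ)).det := by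
  induction m generalizing μ with
  | zero => rw [ssytCount_zero_of_colLen_eq_zero (by omega), Matrix.det_fin_zero, Nat.cast_one]
  | succ m ih =>
    let strips : Finset (Fin m → ℕ) := Fintype.piFinset fun i : Fin m =>
      Icc (μ.rowLen i.castSucc.rev) (μ.rowLen i.succ.rev)
    have mapsTo : Set.MapsTo (fun T (i : Fin m) => (entriesBelow T m).rowLen i.rev)
        {T : SemistandardYoungTableau μ | ∀ i j, (i, j) ∈ μ → T i j < m + 1} strips := fun T hT =>
      (isHorizontalStrip_iff_interlacing (colLen_entriesBelow_le T) hμ).1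
        (isHorizontalStrip_entriesBelow hT)
    have fiber (q) (hq : q ∈ strips) :
        (({T ∈ {T : SemistandardYoungTableau μ | ∀ i j, (i, j) ∈ μ → T i j < m + 1} |
          (fun i : Fin m => (entriesBelow T m).rowLen i.rev) = q}.ncard : ℕ) : ℤ)
          = (Matrix.of fun i j : Fin m => ((q i + i).choose j : ℤ)).det := by
      obtain ⟨ν, hν, hνq⟩ := exists_rowLen_rev_eq
        (monotone_of_mem_piFinset_Icc (rowLen_rev_monotone (m + 1) μ) hq)
      obtain rfl : (fun i : Fin m => ν.rowLen i.rev) = q := funext hνq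
      have eq_iff (T : SemistandardYoungTableau μ) :
          (fun i : Fin m => (entriesBelow T m).rowLen i.rev) = (fun i : Fin m => ν.rowLen i.rev) ↔
            entriesBelow T m = ν :=
        ⟨fun h => eq_of_rowLen_rev_eq (colLen_entriesBelow_le T) hν (congrFun h),
          fun h => by rw [h]⟩
      simp only [eq_iff]
      rw [ncard_ssyt_entriesBelow_eq ((isHorizontalStrip_iff_interlacing hν hμ).2 hq), ih hν]
      rfl
    rw [ssytCount, ncard_eq_sum_ncard_fiber (finite_setOf_ssyt_lt μ (m + 1)) mapsTo,
      Nat.cast_sum, sum_congr rfl fiber]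
    simp only [beta]
    rw [← sum_det_choose_interlacing (rowLen_rev_monotone (m + 1) μ)]

/-- **Weyl dimension formula** for `GL_m`. -/
theorem ssytCount_mul_vandermondeProd_range (hμ : μ.colLen 0 ≤ m) :
    ssytCount μ m * vandermondeProd (range m) = vandermondeProd (betaSet m μ) := by
  zify
  rw [vandermondeProd_range, cast_vandermondeProd_betaSet, ← prod_factorial_mul_det_choose,
    cast_ssytCount_eq_det_choose hμ, mul_comm, Finset.prod_range]
  push_cast
  rfl

end WeylDimension

section Rectangle

variable {m n : ℕ} {μ : YoungDiagram}

theorem card_betaSet (m : ℕ) (μ : YoungDiagram) : #(betaSet m μ) = m := by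
  rw [betaSet, card_image_of_injective _ (beta_strictMono m μ).injective, card_univ,
    Fintype.card_fin]

theorem rowLen_le_of_le_rect (hμ : μ ≤ rect m n) (i : ℕ) : μ.rowLen i ≤ n :=
  (μ.rowLen_anti 0 i i.zero_le).trans (le_rect_iff.1 hμ).2

theorem betaSet_subset_range (hμ : μ ≤ rect m n) : betaSet m μ ⊆ range (m + n) := by
  refine image_subset_iff.2 fun i _ => mem_range.2 ?_
  have := rowLen_le_of_le_rect hμ i.rev
  rw [beta]
  omega

theorem rowLen_complement (m n : ℕ) (μ : YoungDiagram) (i : Fin m) :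
    (complement m n μ).rowLen i = n - μ.rowLen i.rev := by
  refine rowLen_eq_of_mem_iff fun j => ?_
  rw [← mem_cells, complement, mem_filter, mem_product, mem_range, mem_range, Fin.val_rev,
    Nat.sub_sub, add_comm 1]
  simp only
  omega

theorem beta_complement (hμ : μ ≤ rect m n) (i : Fin m) :
    beta m (complement m n μ) i = m + n - 1 - beta m μ i.rev := by
  have := rowLen_le_of_le_rect hμ i
  rw [beta, beta, rowLen_complement, Fin.rev_rev, Fin.val_rev]
  omega

theorem betaSet_complement (hμ : μ ≤ rect m n) :
    betaSet m (complement m n μ) = (betaSet m μ).image (m + n - 1 - ·) := by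
  have reindex : beta m (complement m n μ) = ((m + n - 1 - ·) ∘ beta m μ) ∘ Fin.revPerm :=
    funext (beta_complement hμ)
  rw [betaSet, betaSet, image_image, reindex, ← image_image, image_univ_equiv]

theorem vandermondeProd_betaSet_complement (hμ : μ ≤ rect m n) :
    vandermondeProd (betaSet m (complement m n μ)) = vandermondeProd (betaSet m μ) := by
  rw [betaSet_complement hμ]
  refine vandermondeProd_image_of_dist_eq fun a ha b hb => ?_
  have := mem_range.1 (betaSet_subset_range hμ ha)
  have := mem_range.1 (betaSet_subset_range hμ hb)
  simp only [Nat.dist]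
  omega

theorem prod_betaSet_complement {M : Type*} [CommMonoid M] (hμ : μ ≤ rect m n) (f : ℕ → M) :
    ∏ b ∈ betaSet m (complement m n μ), f (m + n - 1 - b) = ∏ a ∈ betaSet m μ, f a := by
  have sub_sub (a) (ha : a ∈ betaSet m μ) : m + n - 1 - (m + n - 1 - a) = a := by
    have := mem_range.1 (betaSet_subset_range hμ ha)
    omega
  rw [betaSet_complement hμ, prod_image (Set.LeftInvOn.injOn sub_sub)]
  exact prod_congr rfl fun a ha => by rw [sub_sub a ha]

theorem transpose_le_rect (hμ : μ ≤ rect m n) : μ.transpose ≤ rect n m := by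
  rintro ⟨i, j⟩ hij
  exact mem_rect.2 (mem_rect.1 (hμ (mem_transpose.1 hij))).symm

/-- The horizontal and vertical steps of the boundary path of `μ` occupy complementary positions;
reading the path backwards turns the vertical ones into the beta numbers of the complement. -/
theorem betaSet_transpose (hμ : μ ≤ rect m n) :
    betaSet n μ.transpose = range (m + n) \ betaSet m (complement m n μ) := by
  refine eq_of_subset_of_card_le (subset_sdiff.2 ⟨?_, ?_⟩) ?_
  · exact add_comm m n ▸ betaSet_subset_range (transpose_le_rect hμ)
  · simp only [betaSet, disjoint_left, mem_image, mem_univ, true_and]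
    rintro _ ⟨j, rfl⟩ ⟨i, hij⟩
    have cell : j.rev < μ.rowLen i ↔ i < μ.colLen j.rev :=
      mem_iff_lt_rowLen.symm.trans mem_iff_lt_colLen
    have := rowLen_le_of_le_rect hμ i
    rw [beta, beta, rowLen_complement, rowLen_transpose, Fin.rev_rev] at hij
    rw [Fin.val_rev] at cell hij
    omega
  · rw [card_sdiff_of_subset (betaSet_subset_range complement_le_rect), card_range, card_betaSet,
      card_betaSet, Nat.add_sub_cancel_left]

theorem sytCount_rect_mul_vandermondeProd (m n : ℕ) :
    sytCount (rect m n) * vandermondeProd (range (m + n))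
      = (m * n)! * (vandermondeProd (range m) * vandermondeProd (range n)) := by
  have hbeta : betaSet m (rect m n) = (range m).image (n + ·) :=
    betaSet_of_forall_rowLen_eq fun i hi => rowLen_eq_of_mem_iff fun j => by simp [mem_rect, hi]
  have shift : vandermondeProd ((range m).image (n + ·)) = vandermondeProd (range m) :=
    vandermondeProd_image_of_dist_eq fun a _ b _ => Nat.dist_add_add_left n a b
  have frobenius := sytCount_mul_prod_factorial_betaSet (le_rect_iff.1 (le_refl (rect m n))).1
  rw [card_rect, hbeta, shift] at frobenius
  rw [add_comm m n, vandermondeProd_range_add, mul_left_comm, frobenius]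
  ring

theorem ssytCount_mul_ssytCount_transpose_mul_prod_factorial (hμ : μ ≤ rect m n) :
    ssytCount μ m * ssytCount μ.transpose n
        * (vandermondeProd (range m) * vandermondeProd (range n))
        * ((∏ a ∈ betaSet m μ, a !) * ∏ b ∈ betaSet m (complement m n μ), b !)
      = vandermondeProd (betaSet m μ) ^ 2 * vandermondeProd (range (m + n)) := by
  have weyl := ssytCount_mul_vandermondeProd_range (le_rect_iff.1 hμ).1
  have weyl' := ssytCount_mul_vandermondeProd_range (le_rect_iff.1 (transpose_le_rect hμ)).1
  have duality := vandermondeProd_range_sdiff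
    (betaSet_subset_range (complement_le_rect (m := m) (n := n) (μ := μ)))
  rw [prod_mul_distrib, prod_betaSet_complement hμ (·!), ← betaSet_transpose hμ, ← weyl',
    vandermondeProd_betaSet_complement hμ] at duality
  rw [sq, mul_assoc (vandermondeProd (betaSet m μ)), ← duality, ← weyl]
  ring

theorem ssytCount_mul_ssytCount_transpose_mul_factorial (hμ : μ ≤ rect m n) :
    ssytCount μ m * ssytCount μ.transpose n
        * (vandermondeProd (range m) * vandermondeProd (range n))
        * (μ.card ! * (complement m n μ).card !)
      = sytCount μ * sytCount (complement m n μ) * vandermondeProd (range (m + n)) := by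
  set A := ∏ a ∈ betaSet m μ, a ! with hA
  set B := ∏ b ∈ betaSet m (complement m n μ), b ! with hB
  have pos : 0 < A * B := Nat.mul_pos (prod_pos fun a _ => a.factorial_pos)
    (prod_pos fun b _ => b.factorial_pos)
  have frobenius : sytCount μ * A = μ.card ! * vandermondeProd (betaSet m μ) :=
    sytCount_mul_prod_factorial_betaSet (le_rect_iff.1 hμ).1
  have frobenius' : sytCount (complement m n μ) * B
      = (complement m n μ).card ! * vandermondeProd (betaSet m μ) := by
    rw [hB, sytCount_mul_prod_factorial_betaSet (le_rect_iff.1 complement_le_rect).1,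
      vandermondeProd_betaSet_complement hμ]
  refine Nat.eq_of_mul_eq_mul_right pos ?_
  calc _ = μ.card ! * (complement m n μ).card !
          * (vandermondeProd (betaSet m μ) ^ 2 * vandermondeProd (range (m + n))) := by
        rw [← ssytCount_mul_ssytCount_transpose_mul_prod_factorial hμ, hA, hB]
        ring
    _ = sytCount μ * A * (sytCount (complement m n μ) * B) * vandermondeProd (range (m + n)) := by
        rw [frobenius, frobenius']
        ring
    _ = _ := by ring

theorem ssytCount_mul_ssytCount_transpose_mul_sytCount_rect (hμ : μ ≤ rect m n) :
    ssytCount μ m * ssytCount μ.transpose n * sytCount (rect m n)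
      = sytCount μ * sytCount (complement m n μ) * (m * n).choose μ.card := by
  have hle : μ.card ≤ m * n := le_of_add_le_right (card_complement_add_card hμ).le
  have hcard : (complement m n μ).card = m * n - μ.card :=
    Nat.eq_sub_of_add_eq (card_complement_add_card hμ)
  have pos : 0 < vandermondeProd (range m) * vandermondeProd (range n)
      * (μ.card ! * (complement m n μ).card !) := by
    have := vandermondeProd_pos (range m)
    have := vandermondeProd_pos (range n)
    positivity
  refine Nat.eq_of_mul_eq_mul_right pos ?_
  calc _ = sytCount μ * sytCount (complement m n μ)
          * (sytCount (rect m n) * vandermondeProd (range (m + n))) := by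
        rw [mul_left_comm _ (sytCount (rect m n)),
          ← ssytCount_mul_ssytCount_transpose_mul_factorial hμ]
        ring
    _ = _ := by
        rw [sytCount_rect_mul_vandermondeProd, ← Nat.choose_mul_factorial_mul_factorial hle, hcard]
        ring

theorem sytCount_rect_pos (m n : ℕ) : 0 < sytCount (rect m n) := by
  have := vandermondeProd_pos (range m)
  have := vandermondeProd_pos (range n)
  refine Nat.pos_of_mul_pos_right (b := vandermondeProd (range (m + n))) ?_
  rw [sytCount_rect_mul_vandermondeProd]
  positivity

end Rectangle

/-- the probability `P(λ) = s_λ(1^m) s_{λ'}(1^n) / C(mn,p)` of a random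
irreducible component of `Λ^p(ℂ^m ⊗ ℂ^n)` equals the probability that a uniformly random
standard Young tableau of the rectangle `n^m` has its `p` smallest entries forming the
shape `λ`. -/
theorem random_component_eq_random_tableau (m n p : ℕ) (μ : YoungDiagram)
    (hμ : μ ≤ rect m n) (hp : μ.card = p) :
    (ssytCount μ m * ssytCount μ.transpose n : ℚ) / (m * n).choose p
      = (Set.ncard {T | IsSyt (rect m n) T ∧
            ∀ c, c ∈ rect m n → (T c < p ↔ c ∈ μ)} : ℚ) / sytCount (rect m n) := by
  subst hp
  have hle : μ.card ≤ m * n := le_of_add_le_right (card_complement_add_card hμ).le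
  have choose_ne_zero : ((m * n).choose μ.card : ℚ) ≠ 0 :=
    Nat.cast_ne_zero.2 (Nat.choose_pos hle).ne'
  have rect_ne_zero : (sytCount (rect m n) : ℚ) ≠ 0 :=
    Nat.cast_ne_zero.2 (sytCount_rect_pos m n).ne'
  rw [div_eq_div_iff choose_ne_zero rect_ne_zero, ncard_isSyt_rect_restrict hμ]
  exact_mod_cast ssytCount_mul_ssytCount_transpose_mul_sytCount_rect hμ
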